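/- arXiv:2006.10549 — 2 statements merged into one kernel-verified Lean document; each statement's English description precedes it below -/
import Mathlib

section
/- For every τ in the complex upper half-plane ℍ, the set { M = (a,b;c,d) ∈ SL₂(ℤ) : ac > 0 and Re(Mτ) < 0 } is finite; moreover, this set is empty whenever Im τ > 1/2. -/
open Complex MeasureTheory
open scoped Real

noncomputable section

namespace LHMF

abbrev SL2Z := Matrix.SpecialLinearGroup (Fin 2) ℤ

/-- Möbius action of `SL₂(ℤ)` on `ℂ`. -/
def moeb (M : SL2Z) (τ : ℂ) : ℂ :=
  ((M.1 0 0 : ℂ) * τ + (M.1 0 1 : ℂ)) / ((M.1 1 0 : ℂ) * τ + (M.1 1 1 : ℂ))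

/-- Automorphy factor `j(M,τ) = cτ + d`. -/
def jfac (M : SL2Z) (τ : ℂ) : ℂ := (M.1 1 0 : ℂ) * τ + (M.1 1 1 : ℂ)

/-- `E₁`: union of all `SL₂(ℤ)`-translates of the positive imaginary axis. -/
def E1 : Set ℂ := ⋃ M : SL2Z, (fun y : ℝ => moeb M ((y : ℂ) * Complex.I)) '' Set.Ioi 0

/-- Wirtinger derivative `∂f/∂τ`. -/
def dtau (f : ℂ → ℂ) (τ : ℂ) : ℂ :=
  (fderiv ℝ f τ 1 - Complex.I * fderiv ℝ f τ Complex.I) / 2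

/-- Wirtinger derivative `∂f/∂τ̄`. -/
def dtaubar (f : ℂ → ℂ) (τ : ℂ) : ℂ :=
  (fderiv ℝ f τ 1 + Complex.I * fderiv ℝ f τ Complex.I) / 2

/-- The operator `ξ_κ f = 2i v^κ conj(∂f/∂τ̄)`. -/
def xiOp (κ : ℤ) (f : ℂ → ℂ) (τ : ℂ) : ℂ :=
  2 * Complex.I * ((τ.im : ℂ) ^ κ) * starRingEnd ℂ (dtaubar f τ)

/-- The operator `𝒟 = (1/(2πi)) ∂/∂τ`. -/
def Dop (f : ℂ → ℂ) : ℂ → ℂ := fun τ => (2 * (π : ℂ) * Complex.I)⁻¹ * dtau f τ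

/-- Maass raising operator of weight `κ`. -/
def raiseOp (κ : ℤ) (f : ℂ → ℂ) (τ : ℂ) : ℂ :=
  2 * Complex.I * dtau f τ + (κ : ℂ) * (τ.im : ℂ)⁻¹ * f τ

/-- Iterated raising operator `R_κ^m = R_{κ+2m-2} ∘ ⋯ ∘ R_{κ+2} ∘ R_κ`. -/
def raiseIter (κ : ℤ) : ℕ → (ℂ → ℂ) → (ℂ → ℂ)
  | 0 => fun f => f
  | m + 1 => fun f => raiseOp (κ + 2 * m) (raiseIter κ m f)

/-- Petersson's Poincaré series `H_{k,k-1}(z,τ)`. -/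
def Hpet (k : ℕ) (z τ : ℂ) : ℂ :=
  ∑' M : SL2Z, jfac M τ ^ (2 * k - 2) * ((moeb M τ).im : ℂ) ^ (2 * k - 1) *
    (z - moeb M τ)⁻¹ * (z - starRingEnd ℂ (moeb M τ)) ^ (1 - 2 * (k : ℤ))

/-- The locally harmonic Maass form `H_{1-k,n}`. -/
def Hlhmf (k n : ℕ) (τ : ℂ) : ℂ :=
  (2 * Complex.I) ^ (2 * k - 2) / (2 * (π : ℂ)) *
    ∫ y in Set.Ioi (0 : ℝ), Hpet k ((y : ℂ) * Complex.I) τ * (y : ℂ) ^ n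

/-- The cusp form `R_n` of weight `2k`. -/
def Rnform (k n : ℕ) (τ : ℂ) : ℂ :=
  (2 : ℂ) ^ (2 * k - 3) / (Complex.I ^ (2 * k - 1 - n) * (Nat.choose (2 * k - 2) n : ℂ) * (π : ℂ)) *
    ∑' M : SL2Z, jfac M τ ^ (-2 * (k : ℤ)) * moeb M τ ^ (-(n : ℤ) - 1)

/-- Holomorphic Eichler integral of `f` (weight `2k`), along a vertical path. -/
def eichlerHol (k : ℕ) (f : ℂ → ℂ) (τ : ℂ) : ℂ :=
  (-2 * (π : ℂ) * Complex.I) ^ (2 * k - 1) / (Nat.factorial (2 * k - 2) : ℂ) *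
    ∫ t in Set.Ioi (0 : ℝ), f (τ + (t : ℂ) * Complex.I) * ((t : ℂ) * Complex.I) ^ (2 * k - 2) *
      Complex.I

/-- Non-holomorphic Eichler integral `f^*` of `f` (weight `2k`), along a vertical path. -/
def eichlerStar (k : ℕ) (f : ℂ → ℂ) (τ : ℂ) : ℂ :=
  (-2 * Complex.I) ^ (1 - 2 * (k : ℤ)) *
    ∫ t in Set.Ioi (0 : ℝ),
      starRingEnd ℂ (f (-(starRingEnd ℂ (-(starRingEnd ℂ τ) + (t : ℂ) * Complex.I)))) *
        (-(starRingEnd ℂ τ) + (t : ℂ) * Complex.I + τ) ^ (2 * k - 2) * Complex.I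

/-- Bernoulli polynomial evaluated at a complex number. -/
def bernC (m : ℕ) (τ : ℂ) : ℂ := Polynomial.aeval τ (Polynomial.bernoulli m)

/-- Periodized Bernoulli polynomial `𝔹_m(τ) = B_m(τ - ⌊Re τ⌋)`. -/
def bernPer (m : ℕ) (τ : ℂ) : ℂ := bernC m (τ - (⌊τ.re⌋ : ℂ))

/-- The period `r_n(E_{2k})` of the Eisenstein series, for `0 < n < 2k-2`. -/
def rnE (k n : ℕ) : ℚ :=
  if n % 2 = 0 then 0
  else (-1) ^ ((n - 1) / 2) * (2 * (k : ℚ)) * bernoulli (n + 1) * bernoulli (2 * k - 1 - n) /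
    (bernoulli (2 * k) * ((n : ℚ) + 1) * ((2 * k - 1 - n : ℕ) : ℚ))

/-- The local polynomial `P_{1-k,n}`. -/
def Ppoly (k n : ℕ) (τ : ℂ) : ℂ :=
  (rnE k n : ℂ)
  + (-Complex.I) ^ (n + 1) / ((n : ℂ) + 1) * bernPer (n + 1) τ
  + Complex.I ^ (n + 1) / ((2 * k - 1 - n : ℕ) : ℂ) * bernPer (2 * k - 1 - n) τ
  + Complex.I ^ (1 - (n : ℤ)) / 2 *
      ∑' M : {M : SL2Z // 0 < M.1 0 0 * M.1 1 0 ∧ (moeb M τ).re < 0},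
        jfac M.1 τ ^ (2 * k - 2) *
          (moeb M.1 τ ^ n - (-1 : ℂ) ^ n * moeb M.1 τ ^ (2 * k - 2 - n))

/-- The binary quadratic form `[a,b,c]` evaluated at complex arguments. -/
def qfC (a b c : ℤ) (x y : ℂ) : ℂ := (a : ℂ) * x ^ 2 + (b : ℂ) * x * y + (c : ℂ) * y ^ 2

/-- CM point of the positive definite form `[a,b,c]`. -/
def cmPoint (a b c : ℤ) : ℂ :=
  (-(b : ℂ) + Complex.I * ((Real.sqrt (((b ^ 2 - 4 * a * c).natAbs : ℝ))) : ℂ)) / (2 * (a : ℂ))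

/-- The form `[a,b,c] ∘ M`. -/
def qfComp (a b c : ℤ) (M : SL2Z) : ℤ × ℤ × ℤ :=
  (a * (M.1 0 0) ^ 2 + b * (M.1 0 0) * (M.1 1 0) + c * (M.1 1 0) ^ 2,
   2 * a * (M.1 0 0) * (M.1 0 1) + b * ((M.1 0 0) * (M.1 1 1) + (M.1 0 1) * (M.1 1 0)) +
     2 * c * (M.1 1 0) * (M.1 1 1),
   a * (M.1 0 1) ^ 2 + b * (M.1 0 1) * (M.1 1 1) + c * (M.1 1 1) ^ 2)

/-- `w_P`: order of the stabilizer of `P = [a,b,c]` in `PSL₂(ℤ)` (half the order of the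
stabilizer in `SL₂(ℤ)`, which contains `±1`). -/
def wP (a b c : ℤ) : ℕ := Nat.card {M : SL2Z // qfComp a b c M = (a, b, c)} / 2

/-- The meromorphic modular form `f_{k,P}` for `P = [a,b,c]`. -/
def fkP (k : ℕ) (a b c : ℤ) (z : ℂ) : ℂ :=
  (((((b ^ 2 - 4 * a * c).natAbs : ℝ)) ^ ((k : ℝ) - 1 / 2) : ℝ) : ℂ) /
      (2 * (π : ℂ) * (wP a b c : ℂ)) *
    ∑' M : SL2Z, (qfC a b c ((M.1 0 0 : ℂ) * z + (M.1 0 1 : ℂ))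
      ((M.1 1 0 : ℂ) * z + (M.1 1 1 : ℂ))) ^ (-(k : ℤ))

/-- The `n`-th period `r_n(f) = ∫₀^∞ f(iy) y^n dy`. -/
def periodN (n : ℕ) (f : ℂ → ℂ) : ℂ :=
  ∫ y in Set.Ioi (0 : ℝ), f ((y : ℂ) * Complex.I) * (y : ℂ) ^ n

/-- Epstein zeta function of `[a,b,c]` at an integer `k`. -/
def epstein (a b c : ℤ) (k : ℕ) : ℝ :=
  ∑' p : {p : ℤ × ℤ // p ≠ (0, 0)},
    ((a * p.1.1 ^ 2 + b * p.1.1 * p.1.2 + c * p.1.2 ^ 2 : ℤ) : ℝ) ^ (-(k : ℤ))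

/-- `sgn(M)` for `M = (a,b;c,d)`: `sgn(ac)` if `ac ≠ 0`, else `sgn(bd)`. -/
def sgnM (M : SL2Z) : ℤ :=
  if M.1 0 0 * M.1 1 0 ≠ 0 then Int.sign (M.1 0 0 * M.1 1 0) else Int.sign (M.1 0 1 * M.1 1 1)

/-- Upper incomplete Gamma function `Γ(s,x)` for a natural number `s`. -/
def GammaUpper (s : ℕ) (x : ℝ) : ℝ := ∫ t in Set.Ioi x, Real.exp (-t) * t ^ (s - 1)

/-- A cusp form of weight `2k` for `SL₂(ℤ)`, as a function on `ℂ` (holomorphic on `ℍ`,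
modular of weight `2k`, vanishing at the cusp `i∞`). -/
def IsCuspForm2k (k : ℕ) (f : ℂ → ℂ) : Prop :=
  (∀ τ : ℂ, 0 < τ.im → DifferentiableAt ℂ f τ) ∧
  (∀ (M : SL2Z) (τ : ℂ), 0 < τ.im → f (moeb M τ) = jfac M τ ^ (2 * k) * f τ) ∧
  Filter.Tendsto f (Filter.comap Complex.im Filter.atTop) (nhds 0)

/-! For `M = (a,b;c,d)` with `ac ≠ 0`, the curve `Re(Mτ) = 0` is the semicircle through `-b/a` and
`-d/c`, and `ac · Re(Mτ) < 0` says that `τ`, or its complex conjugate, lies inside it. Its radius is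
`1/|2ac|` and its centre `-(ad+bc)/(2ac)`, so this reads `|2acτ + (ad+bc)| < 1`. Taking imaginary
parts gives `|2ac Im τ| < 1`, hence no such `M` if `|Im τ| ≥ 1/2`. In general only finitely many
points of the lattice `ℤ·2τ + ℤ` lie in the unit disc, and `(ac, ad+bc)` together with `(a, c)`, one
of the finitely many factorizations of `ac`, determines `M`. -/

theorem normSq_ofReal_mul_add_sub_normSq_ofReal_mul_sub (a c : ℝ) (z w : ℂ) :
    normSq (a * w + c * z) - normSq (a * w - c * z) =
      4 * (a * c) * (z * starRingEnd ℂ w).re := by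
  simp only [normSq_apply, add_re, add_im, sub_re, sub_im, mul_re, mul_im, ofReal_re, ofReal_im,
    conj_re, conj_im]
  ring

theorem re_div_mul_normSq (z w : ℂ) : (z / w).re * normSq w = (z * starRingEnd ℂ w).re := by
  rcases eq_or_ne w 0 with rfl | hw
  · simp
  · rw [← re_mul_ofReal, ← mul_conj, ← mul_assoc, div_mul_cancel₀ z hw]

theorem finite_setOf_norm_intCast_mul_add_lt {z : ℂ} (hz : z.im ≠ 0) (r : ℝ) :
    {p : Fin 2 → ℤ | ‖(p 0 : ℂ) * z + p 1‖ < r}.Finite := by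
  have upper (w : UpperHalfPlane) : {p : Fin 2 → ℤ | ‖(p 0 : ℂ) * w + p 1‖ < r}.Finite := by
    have hlim := (ModularGroup.tendsto_normSq_coprime_pair w).eventually_ge_atTop (r ^ 2)
    refine (Filter.eventually_cofinite.mp hlim).subset fun p hp => ?_
    rw [Set.mem_ofPred_eq, normSq_eq_norm_sq, not_le]
    exact pow_lt_pow_left₀ hp (norm_nonneg _) two_ne_zero
  rcases hz.lt_or_gt with hneg | hpos
  · convert upper ⟨starRingEnd ℂ z, by simpa using hneg⟩ using 4 with p
    rw [← norm_conj]
    simp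
  · exact upper ⟨z, hpos⟩

theorem specialLinearGroup_ext_of_column_zero {R : Type*} [CommRing R] [NoZeroDivisors R]
    (h2 : (2 : R) ≠ 0) {M N : Matrix.SpecialLinearGroup (Fin 2) R}
    (ha : M.1 0 0 ≠ 0) (hc : M.1 1 0 ≠ 0) (haa : M.1 0 0 = N.1 0 0) (hcc : M.1 1 0 = N.1 1 0)
    (h : M.1 0 0 * M.1 1 1 + M.1 0 1 * M.1 1 0 = N.1 0 0 * N.1 1 1 + N.1 0 1 * N.1 1 0) :
    M = N := by
  have hdetM := M.1.det_fin_two.symm.trans M.2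
  have hdetN := N.1.det_fin_two.symm.trans N.2
  rw [← haa, ← hcc] at h hdetN
  have hbb : M.1 0 1 = N.1 0 1 := by
    refine mul_left_cancel₀ (mul_ne_zero h2 hc) ?_
    linear_combination h - hdetM + hdetN
  have hdd : M.1 1 1 = N.1 1 1 := by
    refine mul_left_cancel₀ (mul_ne_zero h2 ha) ?_
    linear_combination h + hdetM - hdetN
  ext i j
  fin_cases i <;> fin_cases j <;> assumption

/-- The pair `(ac, ad+bc)` of leading coefficients of the quadratic polynomial `(aX+b)(cX+d)`, of
discriminant `1`, whose roots are the endpoints of the geodesic `Re(Mτ) = 0`. Its values are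
functions on `Fin 2` to match Mathlib's encoding of the lattice points `mτ + n`. -/
def geodesicCoeffs (M : SL2Z) : Fin 2 → ℤ :=
  ![M.1 0 0 * M.1 1 0, M.1 0 0 * M.1 1 1 + M.1 0 1 * M.1 1 0]

/-- The derivative `2acτ + (ad+bc)` at `τ` of the polynomial `(aX+b)(cX+d)` attached to `M`. For
`ac ≠ 0` its absolute value is the distance from `τ` to the centre of the semicircle `Re(Mτ) = 0`
in units of the radius. -/
def geodesicDeriv (M : SL2Z) (τ : ℂ) : ℂ :=
  geodesicCoeffs M 0 * (2 * τ) + geodesicCoeffs M 1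

theorem normSq_geodesicDeriv (M : SL2Z) (τ : ℂ) :
    normSq (geodesicDeriv M τ) =
      1 + 4 * (M.1 0 0 * M.1 1 0 * (moeb M τ).re) * normSq (jfac M τ) := by
  have hdet : (M.1 0 0 : ℂ) * M.1 1 1 - M.1 0 1 * M.1 1 0 = 1 := by
    exact_mod_cast (M.1.det_fin_two).symm.trans M.2
  have hsum : geodesicDeriv M τ =
      (M.1 0 0 : ℝ) * jfac M τ + (M.1 1 0 : ℝ) * (M.1 0 0 * τ + M.1 0 1) := by
    simp only [geodesicDeriv, geodesicCoeffs, jfac, Matrix.cons_val_zero, Matrix.cons_val_one]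
    push_cast
    ring
  have hdiff : (M.1 0 0 : ℝ) * jfac M τ - (M.1 1 0 : ℝ) * (M.1 0 0 * τ + M.1 0 1) = (1 : ℂ) := by
    simp only [jfac]
    push_cast
    linear_combination hdet
  have hpol := normSq_ofReal_mul_add_sub_normSq_ofReal_mul_sub (M.1 0 0) (M.1 1 0)
    (M.1 0 0 * τ + M.1 0 1) (jfac M τ)
  rw [← hsum, hdiff, map_one, ← re_div_mul_normSq] at hpol
  unfold moeb
  unfold jfac at hpol ⊢
  linear_combination hpol

theorem norm_geodesicDeriv_lt_one {M : SL2Z} {τ : ℂ}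
    (h : (M.1 0 0 * M.1 1 0 : ℝ) * (moeb M τ).re < 0) : ‖geodesicDeriv M τ‖ < 1 := by
  have hj : jfac M τ ≠ 0 := by
    intro hj
    have hmoeb : moeb M τ = 0 := by rw [moeb, ← jfac, hj, div_zero]
    simp [hmoeb] at h
  rw [← sq_lt_one_iff₀ (norm_nonneg _), ← normSq_eq_norm_sq, normSq_geodesicDeriv]
  linarith [mul_neg_of_neg_of_pos h (normSq_pos.mpr hj)]

theorem two_mul_abs_im_le_norm_geodesicDeriv {M : SL2Z} (hM : M.1 0 0 * M.1 1 0 ≠ 0) (τ : ℂ) :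
    2 * |τ.im| ≤ ‖geodesicDeriv M τ‖ := by
  have hac : (1 : ℝ) ≤ |(M.1 0 0 * M.1 1 0 : ℤ)| := by exact_mod_cast Int.one_le_abs hM
  calc 2 * |τ.im| ≤ |((M.1 0 0 * M.1 1 0 : ℤ) : ℝ)| * (2 * |τ.im|) := by
        rw [← Int.cast_abs]
        exact le_mul_of_one_le_left (by positivity) hac
    _ = |(geodesicDeriv M τ).im| := by
        simp [geodesicDeriv, geodesicCoeffs, abs_mul]
    _ ≤ ‖geodesicDeriv M τ‖ := abs_im_le_norm _

theorem finite_preimage_geodesicCoeffs_singleton {p : Fin 2 → ℤ} (hp : p 0 ≠ 0) :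
    (geodesicCoeffs ⁻¹' {p}).Finite := by
  refine Set.Finite.of_injOn (f := fun M : SL2Z => (M.1 0 0, M.1 1 0)) ?_ ?_
    (Int.divisorsAntidiag (p 0)).finite_toSet
  · rintro M rfl
    exact Int.mem_divisorsAntidiag.mpr ⟨rfl, hp⟩
  · rintro M rfl N hN hcol
    obtain ⟨haa, hcc⟩ := Prod.mk.inj hcol
    exact specialLinearGroup_ext_of_column_zero two_ne_zero (left_ne_zero_of_mul hp)
      (right_ne_zero_of_mul hp) haa hcc (congrFun hN 1).symm

theorem finite_setOf_norm_geodesicDeriv_lt {τ : ℂ} (hτ : τ.im ≠ 0) (r : ℝ) :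
    {M : SL2Z | M.1 0 0 * M.1 1 0 ≠ 0 ∧ ‖geodesicDeriv M τ‖ < r}.Finite := by
  have hlattice := finite_setOf_norm_intCast_mul_add_lt (z := 2 * τ) (by simpa using hτ) r
  exact (hlattice.inter_of_right {p | p 0 ≠ 0}).preimage' fun _ ⟨hp, _⟩ =>
    finite_preimage_geodesicCoeffs_singleton hp

theorem finite_sum_set_general {τ : ℂ} (hτ : τ.im ≠ 0) :
    {M : SL2Z | (M.1 0 0 * M.1 1 0 : ℝ) * (moeb M τ).re < 0}.Finite ∧
    (1 / 2 ≤ |τ.im| → {M : SL2Z | (M.1 0 0 * M.1 1 0 : ℝ) * (moeb M τ).re < 0} = ∅) := by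
  have hsub : {M : SL2Z | (M.1 0 0 * M.1 1 0 : ℝ) * (moeb M τ).re < 0} ⊆
      {M | M.1 0 0 * M.1 1 0 ≠ 0 ∧ ‖geodesicDeriv M τ‖ < 1} := by
    rintro M (hM : (M.1 0 0 * M.1 1 0 : ℝ) * (moeb M τ).re < 0)
    exact ⟨by exact_mod_cast left_ne_zero_of_mul hM.ne, norm_geodesicDeriv_lt_one hM⟩
  refine ⟨(finite_setOf_norm_geodesicDeriv_lt hτ 1).subset hsub, fun him => ?_⟩
  refine Set.subset_empty_iff.mp fun M hM => ?_
  obtain ⟨hac, hlt⟩ := hsub hM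
  linarith [two_mul_abs_im_le_norm_geodesicDeriv hac τ]

/-- finiteness of `{M : ac > 0, Re(Mτ) < 0}`, and emptiness for `Im τ > 1/2`. -/
theorem finite_sum_set (τ : ℂ) (hτ : 0 < τ.im) :
    {M : SL2Z | 0 < M.1 0 0 * M.1 1 0 ∧ (moeb M τ).re < 0}.Finite ∧
    (1 / 2 < τ.im → {M : SL2Z | 0 < M.1 0 0 * M.1 1 0 ∧ (moeb M τ).re < 0} = ∅) := by
  have hsub : {M : SL2Z | 0 < M.1 0 0 * M.1 1 0 ∧ (moeb M τ).re < 0} ⊆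
      {M | (M.1 0 0 * M.1 1 0 : ℝ) * (moeb M τ).re < 0} := fun M ⟨hac, hre⟩ =>
    mul_neg_of_pos_of_neg (by exact_mod_cast hac) hre
  obtain ⟨hfin, hempty⟩ := finite_sum_set_general hτ.ne'
  exact ⟨hfin.subset hsub, fun him =>
    Set.subset_eq_empty hsub (hempty (him.le.trans (le_abs_self _)))⟩

end LHMF
end
end

section
/- Let M ∈ SL₂(ℤ) with M ∉ {±I, ±S, ±T, ±ST}, where I is the identity matrix, S = (0,−1;1,0) and T = (1,1;0,1). Then sgn(M·T^{−1}) = sgn(M). -/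
open Complex MeasureTheory
open scoped Real

noncomputable section

namespace LHMF

/-! If `ac ≠ 0`, right multiplication by a power of `T` does not touch the first column, hence
preserves `sgn`. If `ac = 0`, then `M` is `± T ^ n` or `± S T ^ n`, whose sign is `sgn n`,
respectively `-sgn n`; multiplying by `T⁻¹` replaces `n` by `n - 1`, and `sgn (n - 1) = sgn n`
unless `n = 0` (which gives `± I`, `± S`) or `n = 1` (which gives `± T`, `± ST`). -/

section

open ModularGroup

variable {M : SL2Z}

theorem sgnM_of_mul_ne_zero (h : M.1 0 0 * M.1 1 0 ≠ 0) :
    sgnM M = (M.1 0 0 * M.1 1 0).sign :=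
  if_pos h

theorem sgnM_of_mul_eq_zero (h : M.1 0 0 * M.1 1 0 = 0) :
    sgnM M = (M.1 0 1 * M.1 1 1).sign :=
  if_neg (not_not.mpr h)

theorem sgnM_neg (M : SL2Z) : sgnM (-M) = sgnM M := by
  simp only [sgnM, Matrix.SpecialLinearGroup.coe_neg, Matrix.neg_apply, neg_mul_neg]

theorem mul_T_zpow_apply_zero (M : SL2Z) (n : ℤ) (i : Fin 2) : (M * T ^ n).1 i 0 = M.1 i 0 := by
  simp [coe_T_zpow, Matrix.mul_apply]

theorem sgnM_mul_T_zpow (h : M.1 0 0 * M.1 1 0 ≠ 0) (n : ℤ) :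
    sgnM (M * T ^ n) = sgnM M := by
  have h' : (M * T ^ n).1 0 0 * (M * T ^ n).1 1 0 ≠ 0 := by
    rwa [mul_T_zpow_apply_zero, mul_T_zpow_apply_zero]
  rw [sgnM_of_mul_ne_zero h', sgnM_of_mul_ne_zero h, mul_T_zpow_apply_zero, mul_T_zpow_apply_zero]

theorem sgnM_T_zpow (n : ℤ) : sgnM (T ^ n) = n.sign := by
  rw [sgnM_of_mul_eq_zero] <;> simp [coe_T_zpow]

theorem sgnM_S_mul_T_zpow (n : ℤ) : sgnM (S * T ^ n) = -n.sign := by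
  rw [sgnM_of_mul_eq_zero] <;> simp [coe_T_zpow, coe_S]

theorem exists_eq_T_zpow_or_eq_neg_of_lower_left_eq_zero (h : M.1 1 0 = 0) :
    ∃ n : ℤ, M = T ^ n ∨ M = -T ^ n := by
  have det_eq : M.1 0 0 * M.1 1 1 = 1 := by
    simpa only [Matrix.det_fin_two, h, mul_zero, sub_zero] using M.2
  rcases Int.mul_eq_one_iff_eq_one_or_neg_one.mp det_eq with ⟨ha, hd⟩ | ⟨ha, hd⟩
  · refine ⟨M.1 0 1, .inl <| Subtype.ext ?_⟩
    rw [coe_T_zpow, Matrix.eta_fin_two M.1, ha, h, hd]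
    rfl
  · refine ⟨-M.1 0 1, .inr <| Subtype.ext ?_⟩
    rw [Matrix.SpecialLinearGroup.coe_neg, coe_T_zpow, Matrix.eta_fin_two M.1, ha, h, hd]
    simp

theorem exists_eq_S_mul_T_zpow_or_eq_neg_of_upper_left_eq_zero (h : M.1 0 0 = 0) :
    ∃ n : ℤ, M = S * T ^ n ∨ M = -(S * T ^ n) := by
  have lower_left : (S⁻¹ * M).1 1 0 = 0 := by
    simp [Matrix.mul_apply, Matrix.SpecialLinearGroup.coe_inv, coe_S, Matrix.adjugate_fin_two, h]
  obtain ⟨n, hn⟩ := exists_eq_T_zpow_or_eq_neg_of_lower_left_eq_zero lower_left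
  exact ⟨n, by simpa only [inv_mul_eq_iff_eq_mul, mul_neg] using hn⟩

theorem sign_sub_one {n : ℤ} (h₀ : n ≠ 0) (h₁ : n ≠ 1) : (n - 1).sign = n.sign := by
  rcases h₀.lt_or_gt with hn | hn
  · rw [Int.sign_eq_neg_one_of_neg hn, Int.sign_eq_neg_one_of_neg (by lia)]
  · rw [Int.sign_eq_one_of_pos hn, Int.sign_eq_one_of_pos (by lia)]

theorem sgnM_T_zpow_mul_T_inv {n : ℤ} (h₀ : n ≠ 0) (h₁ : n ≠ 1) :
    sgnM (T ^ n * T⁻¹) = sgnM (T ^ n) := by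
  rw [← zpow_sub_one, sgnM_T_zpow, sgnM_T_zpow, sign_sub_one h₀ h₁]

theorem sgnM_S_mul_T_zpow_mul_T_inv {n : ℤ} (h₀ : n ≠ 0) (h₁ : n ≠ 1) :
    sgnM (S * T ^ n * T⁻¹) = sgnM (S * T ^ n) := by
  rw [mul_assoc, ← zpow_sub_one, sgnM_S_mul_T_zpow, sgnM_S_mul_T_zpow, sign_sub_one h₀ h₁]

end

/-- `sgn(M T⁻¹) = sgn(M)` for `M ∉ {±I, ±S, ±T, ±ST}`. -/
theorem sgnM_mul_T_inv (M : SL2Z)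
    (hM : M ≠ 1 ∧ M ≠ -1 ∧ M ≠ ModularGroup.S ∧ M ≠ -ModularGroup.S ∧
      M ≠ ModularGroup.T ∧ M ≠ -ModularGroup.T ∧
      M ≠ ModularGroup.S * ModularGroup.T ∧ M ≠ -(ModularGroup.S * ModularGroup.T)) :
    sgnM (M * ModularGroup.T⁻¹) = sgnM M := by
  obtain ⟨h_one, h_neg_one, hS, h_neg_S, hT, h_neg_T, hST, h_neg_ST⟩ := hM
  by_cases hac : M.1 0 0 * M.1 1 0 = 0
  · rcases mul_eq_zero.mp hac with ha | hc
    · obtain ⟨n, hn⟩ := exists_eq_S_mul_T_zpow_or_eq_neg_of_upper_left_eq_zero ha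
      have h₀ : n ≠ 0 := by rintro rfl; simp only [zpow_zero, mul_one, hS, h_neg_S, or_self] at hn
      have h₁ : n ≠ 1 := by rintro rfl; simp only [zpow_one, hST, h_neg_ST, or_self] at hn
      rcases hn with rfl | rfl <;>
        simp only [neg_mul, sgnM_neg, sgnM_S_mul_T_zpow_mul_T_inv h₀ h₁]
    · obtain ⟨n, hn⟩ := exists_eq_T_zpow_or_eq_neg_of_lower_left_eq_zero hc
      have h₀ : n ≠ 0 := by rintro rfl; simp only [zpow_zero, h_one, h_neg_one, or_self] at hn
      have h₁ : n ≠ 1 := by rintro rfl; simp only [zpow_one, hT, h_neg_T, or_self] at hn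
      rcases hn with rfl | rfl <;>
        simp only [neg_mul, sgnM_neg, sgnM_T_zpow_mul_T_inv h₀ h₁]
  · simpa only [zpow_neg_one] using sgnM_mul_T_zpow hac (-1)

end LHMF
end
end
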